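/- Let n ≥ 2 and let F_n be the free group on free generators x_1, …, x_n. Consider the following 2n−3 automorphisms of F_n: η₁, which sends x₂ to x₂x₁ and fixes every other generator; and, for each k with 3 ≤ k ≤ n, the right transvection ρ_k, which sends x_k to x_k·x₁ and fixes every other generator, and the left transvection λ_k, which sends x_k to x₁⁻¹·x_k and fixes every other generator. Then the group homomorphism from ℤ^{2n−3} to Out(F_n) sending the standard basis vectors to the outer automorphism classes of η₁ and of the ρ_k and λ_k (3 ≤ k ≤ n) is injective; in particular, the images of these 2n−3 automorphisms pairwise commute in Out(F_n) and are a basis of a free abelian subgroup of Out(F_n) of rank 2n−3 (the type E subgroup associated to the basis x_1, …, x_n, with these images as its standard generators). -/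

import Mathlib

/-!
All the automorphisms involved have the form `x_i ↦ x₁^(b i) * x_i * x₁^(a i)` with
`a`, `b` vanishing at the first generator (`IsTwist`). Such an automorphism fixes `x₁`, so
composition adds the exponents and the given generators commute already in `Aut(F_n)`; a product
`∏ g_j ^ c_j` has exponents that are, up to sign, exactly the coordinates of `c`.

Injectivity thus reduces to `IsTwist.eq_zero_of_inner`: if conjugation by `w` is of the above form
and `b` vanishes at the second generator, then `a = b = 0`. This is read off from the
homomorphism `F_n → SL₂(ℤ)` sending `x₁` to `T = !![1, 1; 0, 1]` and every other generator to
`X = !![1, 0; 1, 1]`. The image of `w` commutes with `T`, so it is `!![p, q; 0, p]` with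
`p ≠ 0`, and comparing entries in `W X = T^b X T^a W` yields `q = p b` and `q = -p a`; the second
generator gives `q = 0`.
-/

/-- The subgroup of inner automorphisms (the range of the conjugation homomorphism
`G → Aut(G)`) is normal, so that `Out(G) = Aut(G) ⧸ Inn(G)` is a group. -/
instance mulAutConjRangeNormal (G : Type*) [Group G] :
    (MulAut.conj : G →* MulAut G).range.Normal := by
  constructor
  intro a ha φ
  obtain ⟨x, rfl⟩ := ha
  refine ⟨φ x, ?_⟩
  ext y
  simp [MulAut.conj_apply, MulAut.mul_apply, mul_assoc]

/-- The condition on an automorphism `f` that `f x_i = t ^ b i * x_i * t ^ a i`, where `t = x_z` is a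
chosen free generator, with zero exponents at `t` itself (so that `f` fixes `t`). -/
structure IsTwist {ι : Type*} (z : ι) (f : MulAut (FreeGroup ι)) (a b : ι → ℤ) : Prop where
  right_zero : a z = 0
  left_zero : b z = 0
  map_of : ∀ i, f (FreeGroup.of i) =
    FreeGroup.of z ^ b i * FreeGroup.of i * FreeGroup.of z ^ a i

namespace IsTwist

variable {ι : Type*} {z : ι} {f f' : MulAut (FreeGroup ι)} {a b a' b' : ι → ℤ}

lemma map_base (h : IsTwist z f a b) : f (FreeGroup.of z) = FreeGroup.of z := by
  rw [h.map_of, h.right_zero, h.left_zero]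
  simp

lemma one : IsTwist z (1 : MulAut (FreeGroup ι)) 0 0 := ⟨rfl, rfl, fun i => by simp⟩

lemma mul (h : IsTwist z f a b) (h' : IsTwist z f' a' b') :
    IsTwist z (f * f') (a + a') (b + b') := by
  refine ⟨by simp [h.right_zero, h'.right_zero], by simp [h.left_zero, h'.left_zero],
    fun i => ?_⟩
  rw [MulAut.mul_apply, h'.map_of, map_mul, map_mul, map_zpow, map_zpow, h.map_base, h.map_of,
    Pi.add_apply, Pi.add_apply, add_comm (b i), zpow_add, zpow_add]
  group

lemma inv (h : IsTwist z f a b) : IsTwist z f⁻¹ (-a) (-b) := by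
  refine ⟨by simp [h.right_zero], by simp [h.left_zero], fun i => ?_⟩
  apply f.injective
  rw [MulAut.apply_inv_self, map_mul, map_mul, map_zpow, map_zpow, h.map_base, h.map_of]
  simp only [Pi.neg_apply]
  group

lemma zpow (h : IsTwist z f a b) (k : ℤ) : IsTwist z (f ^ k) (k • a) (k • b) := by
  induction k with
  | zero => simpa using one
  | succ k ih => simpa only [zpow_add_one, add_smul, one_smul] using ih.mul h
  | pred k ih =>
    rw [zpow_sub_one, sub_smul, sub_smul, one_smul, one_smul, sub_eq_add_neg _ a,
      sub_eq_add_neg _ b]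
    exact ih.mul h.inv

lemma list_prod {κ : Type*} {F : κ → MulAut (FreeGroup ι)} {A B : κ → ι → ℤ}
    (h : ∀ j, IsTwist z (F j) (A j) (B j)) (l : List κ) :
    IsTwist z (l.map F).prod (l.map A).sum (l.map B).sum := by
  induction l with
  | nil => simpa using one
  | cons j l ih => simpa using (h j).mul ih

lemma unique (h : IsTwist z f a b) (h' : IsTwist z f' a b) : f = f' := by
  apply MulEquiv.toMonoidHom_injective
  ext i
  exact (h.map_of i).trans (h'.map_of i).symm

lemma commute (h : IsTwist z f a b) (h' : IsTwist z f' a' b') : Commute f f' := by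
  have h₁ := h'.mul h
  rw [add_comm a', add_comm b'] at h₁
  exact (h.mul h').unique h₁

/-- An inner automorphism of twist type with no left exponent at some generator other than the
base one has all its exponents zero. -/
lemma eq_zero_of_inner {w : FreeGroup ι} (h : IsTwist z (MulAut.conj w) a b) {y : ι}
    (hy : y ≠ z) (hby : b y = 0) : a = 0 ∧ b = 0 := by
  classical
  obtain ⟨X, hXm⟩ : ∃ X : Matrix.SpecialLinearGroup (Fin 2) ℤ,
      (X : Matrix (Fin 2) (Fin 2) ℤ) = !![1, 0; 1, 1] := ⟨⟨!![1, 0; 1, 1], by simp⟩, rfl⟩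
  let θ : FreeGroup ι →* Matrix.SpecialLinearGroup (Fin 2) ℤ :=
    FreeGroup.lift fun i => if i = z then ModularGroup.T else X
  have key : ∀ i, θ w * θ (FreeGroup.of i) =
      θ (FreeGroup.of z) ^ b i * θ (FreeGroup.of i) * θ (FreeGroup.of z) ^ a i * θ w := by
    intro i
    rw [← map_zpow, ← map_zpow, ← map_mul, ← map_mul, ← map_mul, ← map_mul, ← h.map_of,
      MulAut.conj_apply]
    simp
  have hz : θ (FreeGroup.of z) = ModularGroup.T := by simp [θ]
  have hX : ∀ i, i ≠ z → θ (FreeGroup.of i) = X := fun i hi => by simp [θ, hi]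
  have hdet := (θ w).det_coe
  rw [Matrix.det_fin_two] at hdet
  have kz := key z
  rw [h.right_zero, h.left_zero, hz] at kz
  replace kz := congrArg
      (fun M : Matrix.SpecialLinearGroup (Fin 2) ℤ => (M : Matrix (Fin 2) (Fin 2) ℤ)) kz
  have k00 := congrFun (congrFun kz 0) 0
  have k01 := congrFun (congrFun kz 0) 1
  simp [ModularGroup.coe_T, Matrix.mul_apply, Fin.sum_univ_two] at k00 k01
  have k11 : (θ w) 1 1 = (θ w) 0 0 := by linarith
  have ent : ∀ i, i ≠ z → (θ w) 0 1 = (θ w) 0 0 * b i ∧ (θ w) 0 1 = - ((θ w) 0 0 * a i) := by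
    intro i hi
    have ki := key i
    rw [hX i hi, hz] at ki
    replace ki := congrArg
      (fun M : Matrix.SpecialLinearGroup (Fin 2) ℤ => (M : Matrix (Fin 2) (Fin 2) ℤ)) ki
    have e00 := congrFun (congrFun ki 0) 0
    have e11 := congrFun (congrFun ki 1) 1
    simp [ModularGroup.coe_T_zpow, Matrix.mul_apply, Fin.sum_univ_two, hXm] at e00 e11
    rw [k11] at e11
    rw [k00] at e00
    constructor <;> linarith
  have hp : (θ w) 0 0 ≠ 0 := by
    intro hp
    simp [hp, k00] at hdet
  have hq : (θ w) 0 1 = 0 := by simpa [hby] using (ent y hy).1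
  constructor
  · funext i
    by_cases hi : i = z
    · rw [hi, h.right_zero]; rfl
    · simpa [hq, hp] using (ent i hi).2
  · funext i
    by_cases hi : i = z
    · rw [hi, h.left_zero]; rfl
    · simpa [hq, hp] using (ent i hi).1

end IsTwist

/-- Exponent of `x₁` to the right of `x_(i+1)` in the image under the `j`-th generator: the one with
index `2 * i - 3` (truncated to `0`, that is `η₁`, when `i = 1`) multiplies it by `x₁`. -/
def rightExp {n : ℕ} (j : Fin (2 * n - 3)) (i : Fin n) : ℤ :=
  if 1 ≤ i.val ∧ j.val = 2 * i.val - 3 then 1 else 0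

/-- Exponent of `x₁` to the left of `x_(i+1)` in the image under the `j`-th generator. -/
def leftExp {n : ℕ} (j : Fin (2 * n - 3)) (i : Fin n) : ℤ :=
  if 2 ≤ i.val ∧ j.val = 2 * i.val - 2 then -1 else 0

lemma sum_rightExp {n : ℕ} (c : Fin (2 * n - 3) → ℤ) (i : Fin n) (j : Fin (2 * n - 3))
    (hi : 1 ≤ i.val) (hj : j.val = 2 * i.val - 3) : ∑ k, c k * rightExp k i = c j := by
  rw [Finset.sum_eq_single j]
  · simp [rightExp, hi, hj]
  · intro k _ hk
    have : k.val ≠ 2 * i.val - 3 := fun h => hk (Fin.ext (h.trans hj.symm))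
    simp [rightExp, this]
  · simp

lemma sum_leftExp {n : ℕ} (c : Fin (2 * n - 3) → ℤ) (i : Fin n) (j : Fin (2 * n - 3))
    (hi : 2 ≤ i.val) (hj : j.val = 2 * i.val - 2) : ∑ k, c k * leftExp k i = - c j := by
  rw [Finset.sum_eq_single j]
  · simp [leftExp, hi, hj]
  · intro k _ hk
    have : k.val ≠ 2 * i.val - 2 := fun h => hk (Fin.ext (h.trans hj.symm))
    simp [leftExp, this]
  · simp

/-- The images in `Out(F_n) = Aut(F_n) ⧸ Inn(F_n)` of the `2n-3` automorphisms `η₁`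
(sending `x₂ ↦ x₂x₁`), `ρ_k : x_k ↦ x_k x₁` and `λ_k : x_k ↦ x₁⁻¹ x_k` (for `3 ≤ k ≤ n`)
pairwise commute, and the homomorphism `ℤ^{2n-3} → Out(F_n)` sending the standard basis
vectors to these classes is injective; i.e. they are a basis of a free abelian subgroup of
`Out(F_n)` of rank `2n-3` (the type E subgroup associated to the basis `x_1, …, x_n`).
Here `g 0 = η₁`, `g (2m+1) = ρ_{m+3}` and `g (2m+2) = λ_{m+3}` for `0 ≤ m < n-2`. -/
theorem typeE_subgroup_out_free_abelian (n : ℕ) (hn : 2 ≤ n)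
    (g : Fin (2 * n - 3) → MulAut (FreeGroup (Fin n)))
    (hη : g ⟨0, by omega⟩ (FreeGroup.of ⟨1, by omega⟩) =
      FreeGroup.of ⟨1, by omega⟩ * FreeGroup.of ⟨0, by omega⟩)
    (hη' : ∀ i : Fin n, i ≠ ⟨1, by omega⟩ → g ⟨0, by omega⟩ (FreeGroup.of i) = FreeGroup.of i)
    (hρ : ∀ m : ℕ, ∀ _ : m < n - 2,
      g ⟨2 * m + 1, by omega⟩ (FreeGroup.of ⟨m + 2, by omega⟩) =
        FreeGroup.of ⟨m + 2, by omega⟩ * FreeGroup.of ⟨0, by omega⟩)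
    (hρ' : ∀ m : ℕ, ∀ _ : m < n - 2, ∀ i : Fin n, i ≠ ⟨m + 2, by omega⟩ →
      g ⟨2 * m + 1, by omega⟩ (FreeGroup.of i) = FreeGroup.of i)
    (hlam : ∀ m : ℕ, ∀ _ : m < n - 2,
      g ⟨2 * m + 2, by omega⟩ (FreeGroup.of ⟨m + 2, by omega⟩) =
        (FreeGroup.of ⟨0, by omega⟩)⁻¹ * FreeGroup.of ⟨m + 2, by omega⟩)
    (hlam' : ∀ m : ℕ, ∀ _ : m < n - 2, ∀ i : Fin n, i ≠ ⟨m + 2, by omega⟩ →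
      g ⟨2 * m + 2, by omega⟩ (FreeGroup.of i) = FreeGroup.of i) :
    (∀ j k, Commute
        (QuotientGroup.mk (s := (MulAut.conj :
            FreeGroup (Fin n) →* MulAut (FreeGroup (Fin n))).range) (g j))
        (QuotientGroup.mk (g k))) ∧
      Function.Injective (fun c : Fin (2 * n - 3) → ℤ =>
        (QuotientGroup.mk ((List.ofFn fun j => g j ^ c j).prod) :
          MulAut (FreeGroup (Fin n)) ⧸ (MulAut.conj :
            FreeGroup (Fin n) →* MulAut (FreeGroup (Fin n))).range)) := by
  have hg : ∀ j, IsTwist (⟨0, by omega⟩ : Fin n) (g j) (rightExp j) (leftExp j) := by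
    intro j
    refine ⟨by simp [rightExp], by simp [leftExp], fun i => ?_⟩
    obtain ⟨j, hj⟩ := j
    obtain rfl | ⟨m, hm, rfl | rfl⟩ : j = 0 ∨ ∃ m, m < n - 2 ∧ (j = 2 * m + 1 ∨ j = 2 * m + 2) := by
      by_cases h0 : j = 0
      · exact Or.inl h0
      · exact Or.inr ⟨(j - 1) / 2, by omega, by omega⟩
    · by_cases hi : i = ⟨1, by omega⟩
      · subst hi
        rw [hη]
        simp [rightExp, leftExp]
      · have hi' : i.val ≠ 1 := fun h => hi (Fin.ext h)
        have h1 : ¬ (1 ≤ i.val ∧ 0 = 2 * i.val - 3) := by omega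
        have h2 : ¬ (2 ≤ i.val ∧ 0 = 2 * i.val - 2) := by omega
        rw [hη' i hi]
        simp only [rightExp, leftExp, if_neg h1, if_neg h2, zpow_zero, one_mul, mul_one]
    · by_cases hi : i = ⟨m + 2, by omega⟩
      · subst hi
        have h1 : 1 ≤ m + 2 ∧ 2 * m + 1 = 2 * (m + 2) - 3 := by omega
        have h2 : ¬ (2 ≤ m + 2 ∧ 2 * m + 1 = 2 * (m + 2) - 2) := by omega
        rw [hρ m hm]
        simp only [rightExp, leftExp, if_pos h1, if_neg h2, zpow_zero, one_mul, zpow_one]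
      · have hi' : i.val ≠ m + 2 := fun h => hi (Fin.ext h)
        have h1 : ¬ (1 ≤ i.val ∧ 2 * m + 1 = 2 * i.val - 3) := by omega
        have h2 : ¬ (2 ≤ i.val ∧ 2 * m + 1 = 2 * i.val - 2) := by omega
        rw [hρ' m hm i hi]
        simp only [rightExp, leftExp, if_neg h1, if_neg h2, zpow_zero, one_mul, mul_one]
    · by_cases hi : i = ⟨m + 2, by omega⟩
      · subst hi
        have h1 : ¬ (1 ≤ m + 2 ∧ 2 * m + 2 = 2 * (m + 2) - 3) := by omega
        have h2 : 2 ≤ m + 2 ∧ 2 * m + 2 = 2 * (m + 2) - 2 := by omega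
        rw [hlam m hm]
        simp only [rightExp, leftExp, if_neg h1, if_pos h2, zpow_zero, mul_one, zpow_neg_one]
      · have hi' : i.val ≠ m + 2 := fun h => hi (Fin.ext h)
        have h1 : ¬ (1 ≤ i.val ∧ 2 * m + 2 = 2 * i.val - 3) := by omega
        have h2 : ¬ (2 ≤ i.val ∧ 2 * m + 2 = 2 * i.val - 2) := by omega
        rw [hlam' m hm i hi]
        simp only [rightExp, leftExp, if_neg h1, if_neg h2, zpow_zero, one_mul, mul_one]
  have hprod : ∀ c : Fin (2 * n - 3) → ℤ, IsTwist (⟨0, by omega⟩ : Fin n)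
      (List.ofFn fun j => g j ^ c j).prod
      (fun i => ∑ k, c k * rightExp k i) (fun i => ∑ k, c k * leftExp k i) := by
    intro c
    have h := IsTwist.list_prod (fun j => (hg j).zpow (c j)) (List.finRange (2 * n - 3))
    rw [← List.ofFn_eq_map, ← List.ofFn_eq_map, ← List.ofFn_eq_map, List.sum_ofFn,
      List.sum_ofFn] at h
    convert h using 1 <;> (funext i; simp [Finset.sum_apply])
  refine ⟨fun j k => ((hg j).commute (hg k)).map (QuotientGroup.mk' _), fun c d hcd => ?_⟩
  obtain ⟨w, hw⟩ := QuotientGroup.eq.mp hcd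
  have ht := (hprod c).inv.mul (hprod d)
  rw [← hw] at ht
  obtain ⟨ha, hb⟩ := ht.eq_zero_of_inner (y := ⟨1, by omega⟩) (by simp) (by simp [leftExp])
  funext j
  -- Odd indices and `0` are right exponents at `x_(i+1)` for `i = (j + 3) / 2`, and positive even
  -- ones are left exponents at `i = j / 2 + 1`.
  by_cases hj : j.val = 0 ∨ j.val % 2 = 1
  · have hi : (j.val + 3) / 2 < n := by have := j.isLt; omega
    have h := congrFun ha ⟨(j.val + 3) / 2, hi⟩
    simp only [Pi.add_apply, Pi.neg_apply, Pi.zero_apply] at h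
    rw [sum_rightExp c _ j (by simp; omega) (by simp; omega),
      sum_rightExp d _ j (by simp; omega) (by simp; omega)] at h
    linarith
  · have hi : j.val / 2 + 1 < n := by have := j.isLt; omega
    have h := congrFun hb ⟨j.val / 2 + 1, hi⟩
    simp only [Pi.add_apply, Pi.neg_apply, Pi.zero_apply] at h
    rw [sum_leftExp c _ j (by simp; omega) (by simp; omega),
      sum_leftExp d _ j (by simp; omega) (by simp; omega)] at h
    linarith
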